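/- There exists a constant C such that for every f ∈ S³, all d ∈ ℕ and every x ∈ 𝒜_d: |G f(x₁) − Ğ_d f(x)| ≤ C·(Σ_{i=1}^2 ‖f^{(i)}‖_{∞,1/2})·e^{|x₁|}·a_d/√d. -/

import Mathlib

/-!
Write `N = 𝒩(x, Y)`. Under the proposal law `N` is Gaussian (`integral_Nf`), with mean
`m = l²/(2d) ∑ (log ρ)''(x_i)` and variance `s² = l²/d ∑ ((log ρ)'(x_i))²`. The difference
`G f(x₁) - Ğ_d f(x)` is therefore a combination of `f''(x₁)` and `f'(x₁) (log ρ)'(x₁)` with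
coefficients `2Φ(-l√J/2) - E[min(1, e^N)]` and `Φ(-l√J/2) - E[e^N; N < 0]`, up to factors `l²/2`
and `l²`.

Both limits are the values of the corresponding Gaussian expectations at the critical parameters
`s' = l√J`, `m' = -s'²/2` (`gaussMin_critical`, `gaussNeg_critical`; the second is an exponential
change of measure). The expectations depend on `(m, s)` in a Lipschitz way near `(m', s')`: for
`E[min(1, e^N)]` because `u ↦ min(1, e^u)` is `1`-Lipschitz (`gaussMin_sub_le`), and for
`E[e^N; N < 0] = E[min(1, e^N)] - Φ(m/s)` because `Φ` is Lipschitz as well (`gaussNeg_sub_le`).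
The concentration conditions defining `𝒜_d` say exactly that `|m - m'|` and `|s² - s'²|` are
`O(a_d/√d + 1/d)`, and `1/d = O(a_d/√d)` since `a_d` is bounded away from `0`. This gives
`expectations_close`. The growth bounds on `f'`, `f''` and `(log ρ)'` with weight `e^{|x|/2}` turn
it into the claim.
-/

open MeasureTheory ProbabilityTheory Filter Set

noncomputable section

/-- The exponentially-weighted sup-norm `‖g‖_{∞,s} = sup_x e^{-s|x|} |g x|`. -/
def normIS (g : ℝ → ℝ) (s : ℝ) : ℝ := ⨆ x : ℝ, Real.exp (-(s * |x|)) * |g x|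

/-- Membership in the space `Sⁿ`: `n`-times continuously differentiable with all
iterated derivatives up to order `n` of sub-exponential growth. -/
def MemS (n : ℕ) (g : ℝ → ℝ) : Prop :=
  ContDiff ℝ n g ∧ ∀ s > (0:ℝ), ∀ i ≤ n,
    BddAbove (Set.range fun x => Real.exp (-(s * |x|)) * |iteratedDeriv i g x|)

/-- A positive sequence is sluggish if it tends to infinity but `a d / √(log d)` stays bounded. -/
def Sluggish (a : ℕ → ℝ) : Prop :=
  (∀ d, 0 < a d) ∧ Tendsto a atTop atTop ∧
    ∃ M : ℝ, ∀ d : ℕ, 2 ≤ d → a d / Real.sqrt (Real.log d) ≤ M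

/-- `(log ρ)'` -/
def dl (ρ : ℝ → ℝ) : ℝ → ℝ := deriv fun x => Real.log (ρ x)

/-- `(log ρ)''` -/
def d2l (ρ : ℝ → ℝ) : ℝ → ℝ := deriv (dl ρ)

/-- `ρ(g) = ∫ g dρ` -/
def rhoE (ρ g : ℝ → ℝ) : ℝ := ∫ x, g x * ρ x

/-- `J = ρ(((log ρ)')²)` -/
def Jc (ρ : ℝ → ℝ) : ℝ := rhoE ρ fun x => (dl ρ x) ^ 2

/-- super-exponential tails: `(x/|x|)·(log ρ)'(x) → -∞` as `|x| → ∞`. -/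
def SuperExpTails (ρ : ℝ → ℝ) : Prop :=
  Tendsto (dl ρ) atTop atBot ∧ Tendsto (dl ρ) atBot atTop

/-- standard normal CDF -/
def stdCDF (t : ℝ) : ℝ := ((gaussianReal 0 1) (Set.Iic t)).toReal

/-- the constant `h(l) = 2l²Φ(-l√J/2)` -/
def hc (ρ : ℝ → ℝ) (l : ℝ) : ℝ := 2 * l ^ 2 * stdCDF (-(l * Real.sqrt (Jc ρ)) / 2)

/-- the limiting (Langevin) generator `G f = (h(l)/2)(f'' + (log ρ)' f')` -/
def Gop (ρ : ℝ → ℝ) (l : ℝ) (f : ℝ → ℝ) (x : ℝ) : ℝ :=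
  hc ρ l / 2 * (deriv (deriv f) x + dl ρ x * deriv f x)

/-- the product measure `ρ_d` on `ℝ^d` -/
def pm (ρ : ℝ → ℝ) (d : ℕ) : Measure (Fin d → ℝ) :=
  Measure.pi fun _ => volume.withDensity fun x => ENNReal.ofReal (ρ x)

/-- law of the proposal `Y ~ N(x, l²/d · I_d)` -/
def gaussPi (l : ℝ) (d : ℕ) (x : Fin d → ℝ) : Measure (Fin d → ℝ) :=
  Measure.pi fun i => gaussianReal (x i) ((l ^ 2 / (d:ℝ)).toNNReal)

/-- the RWM generator `G_d` -/
def Gd (ρ : ℝ → ℝ) (l : ℝ) (d : ℕ) [NeZero d] (f : ℝ → ℝ) (x : Fin d → ℝ) : ℝ :=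
  (d:ℝ) * ∫ y, (f (y 0) - f (x 0)) * min 1 ((∏ i, ρ (y i)) / ∏ i, ρ (x i)) ∂(gaussPi l d x)

/-- the set `A` associated with the constant `c_A` -/
def Aset (ρ : ℝ → ℝ) (c : ℝ) : Set ℝ :=
  {x | |d2l ρ x| < (dl ρ x) ^ 2 ∧ 1 / c < |dl ρ x| ∧ |dl ρ x| < c}

/-- indices `2,…,d` (all coordinates except the first) -/
def restIdx (d : ℕ) : Finset (Fin d) := Finset.univ.filter fun i => (i : ℕ) ≠ 0

/-- the typical sets `𝒜_d` -/
def Ad (ρ : ℝ → ℝ) (c : ℝ) (a : ℕ → ℝ) (d : ℕ) : Set (Fin d → ℝ) :=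
  {x | (1 / ((d : ℝ) - 1)) * ∑ i ∈ restIdx d, Real.exp |x i| < 2 * rhoE ρ (fun t => Real.exp |t|)
    ∧ (∫ t in Aset ρ c, ρ t) / 2 <
        (1 / ((d : ℝ) - 1)) * ∑ i ∈ restIdx d, (Aset ρ c).indicator (fun _ => (1:ℝ)) (x i)
    ∧ (1 / ((d : ℝ) - 1)) * |∑ i ∈ restIdx d, ((dl ρ (x i)) ^ 2 - Jc ρ)| <
        a d / Real.sqrt d * Real.sqrt (3 * rhoE ρ fun t => ((dl ρ t) ^ 2 - Jc ρ) ^ 2)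
    ∧ (1 / ((d : ℝ) - 1)) * |∑ i ∈ restIdx d, (d2l ρ (x i) + Jc ρ)| <
        a d / Real.sqrt d * Real.sqrt (3 * rhoE ρ fun t => (d2l ρ t + Jc ρ) ^ 2)}

/-- `K(x,y)` -/
def Kf (ρ : ℝ → ℝ) (c : ℝ) (x y : ℝ) : ℝ :=
  dl ρ x * (y - x) + d2l ρ x / 2 * (y - x) ^ 2
    + (dl ρ x) ^ 3 * (Aset ρ c).indicator (fun _ => (1:ℝ)) x / 3 * (y - x) ^ 3

/-- `Σ_{i=2}^d K(x_i, Y_i)` -/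
def SK (ρ : ℝ → ℝ) (c : ℝ) (d : ℕ) (x Y : Fin d → ℝ) : ℝ :=
  ∑ i ∈ restIdx d, Kf ρ c (x i) (Y i)

/-- `β(x,y)` -/
def betaF (ρ : ℝ → ℝ) (c l : ℝ) (d : ℕ) [NeZero d] (x : Fin d → ℝ) (y : ℝ) : ℝ :=
  ∫ Y, min 1 (Real.exp (dl ρ (x 0) * (y - x 0) + SK ρ c d x Y)) ∂(gaussPi l d x)

/-- `G̃_d` -/
def tGd (ρ : ℝ → ℝ) (c l : ℝ) (d : ℕ) [NeZero d] (f : ℝ → ℝ) (x : Fin d → ℝ) : ℝ :=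
  (d:ℝ) * ∫ y, (f y - f (x 0)) * betaF ρ c l d x y
    ∂(gaussianReal (x 0) ((l ^ 2 / (d:ℝ)).toNNReal))

/-- `Ĝ_d` -/
def hGd (ρ : ℝ → ℝ) (c l : ℝ) (d : ℕ) [NeZero d] (f : ℝ → ℝ) (x : Fin d → ℝ) : ℝ :=
  l ^ 2 / 2 * deriv (deriv f) (x 0) * (∫ Y, min 1 (Real.exp (SK ρ c d x Y)) ∂(gaussPi l d x))
    + l ^ 2 * deriv f (x 0) * dl ρ (x 0) *
      (∫ Y, (Set.Iio (0:ℝ)).indicator Real.exp (SK ρ c d x Y) ∂(gaussPi l d x))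

/-- `𝒩(x,Y)` -/
def Nf (ρ : ℝ → ℝ) (l : ℝ) (d : ℕ) (x Y : Fin d → ℝ) : ℝ :=
  l ^ 2 / (2 * (d:ℝ)) * ∑ i ∈ restIdx d, d2l ρ (x i)
    + ∑ i ∈ restIdx d, dl ρ (x i) * (Y i - x i)

/-- `Ğ_d` -/
def bGd (ρ : ℝ → ℝ) (l : ℝ) (d : ℕ) [NeZero d] (f : ℝ → ℝ) (x : Fin d → ℝ) : ℝ :=
  l ^ 2 / 2 * deriv (deriv f) (x 0) * (∫ Y, min 1 (Real.exp (Nf ρ l d x Y)) ∂(gaussPi l d x))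
    + l ^ 2 * deriv f (x 0) * dl ρ (x 0) *
      (∫ Y, (Set.Iio (0:ℝ)).indicator Real.exp (Nf ρ l d x Y) ∂(gaussPi l d x))

/-! ### Expectations of functions of a one-dimensional Gaussian -/

/-- The standard normal distribution function is `1`-Lipschitz, its density being at most `1`. -/
lemma stdCDF_sub_le (s t : ℝ) : |stdCDF s - stdCDF t| ≤ |s - t| := by
  wlog hst : t ≤ s generalizing s t
  · rw [abs_sub_comm, abs_sub_comm s]
    exact this t s (le_of_not_ge hst)
  have hpdf : ∀ x, gaussianPDFReal 0 1 x ≤ 1 := by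
    intro x
    rw [gaussianPDFReal]
    have h1 : (1:ℝ) ≤ √(2 * Real.pi * (1 : NNReal)) := by
      rw [Real.one_le_sqrt]
      have := Real.pi_gt_three
      simp only [NNReal.coe_one]
      linarith
    have h2 : Real.exp (-(x - 0) ^ 2 / (2 * (1 : NNReal))) ≤ 1 := by
      rw [Real.exp_le_one_iff]
      simp only [NNReal.coe_one]
      have := sq_nonneg (x - 0)
      linarith
    exact mul_le_one₀ (inv_le_one_of_one_le₀ h1) (Real.exp_nonneg _) h2
  have hmeas : (gaussianReal 0 1) (Ioc t s) ≤ ENNReal.ofReal (s - t) := by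
    rw [gaussianReal_apply _ one_ne_zero, ← Real.volume_Ioc, ← setLIntegral_one]
    refine lintegral_mono fun x => ?_
    rw [gaussianPDF]
    exact ENNReal.ofReal_le_one.2 (hpdf x)
  have hdiff : stdCDF s - stdCDF t = (gaussianReal 0 1).real (Ioc t s) := by
    rw [← Iic_sdiff_Iic, measureReal_sdiff (Iic_subset_Iic.2 hst) measurableSet_Iic]
    rfl
  rw [hdiff, abs_of_nonneg measureReal_nonneg, abs_of_nonneg (sub_nonneg.2 hst)]
  exact ENNReal.toReal_le_of_le_ofReal (sub_nonneg.2 hst) hmeas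

lemma stdCDF_nonneg (t : ℝ) : 0 ≤ stdCDF t := ENNReal.toReal_nonneg

lemma stdCDF_le_one (t : ℝ) : stdCDF t ≤ 1 := measureReal_le_one (μ := gaussianReal 0 1)

/-- `E[min(1, e^{m + sZ})]` for a standard normal `Z`. -/
def gaussMin (m s : ℝ) : ℝ := ∫ z, min 1 (Real.exp (m + s * z)) ∂(gaussianReal 0 1)

/-- `E[e^{m + sZ}; m + sZ < 0]` for a standard normal `Z`. -/
def gaussNeg (m s : ℝ) : ℝ :=
  ∫ z, (Set.Iio (0:ℝ)).indicator Real.exp (m + s * z) ∂(gaussianReal 0 1)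

lemma min_exp_mem (t : ℝ) : 0 ≤ min 1 (Real.exp t) ∧ min 1 (Real.exp t) ≤ 1 :=
  ⟨le_min zero_le_one (Real.exp_nonneg _), min_le_left _ _⟩

lemma indicator_exp_mem (t : ℝ) : 0 ≤ (Set.Iio (0:ℝ)).indicator Real.exp t ∧
    (Set.Iio (0:ℝ)).indicator Real.exp t ≤ 1 := by
  by_cases h : t < 0
  · rw [indicator_of_mem (mem_Iio.2 h)]
    exact ⟨Real.exp_nonneg _, Real.exp_le_one_iff.2 h.le⟩
  · rw [indicator_of_notMem (by simpa using h)]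
    exact ⟨le_rfl, zero_le_one⟩

lemma measurable_indicator_exp : Measurable ((Set.Iio (0:ℝ)).indicator Real.exp) :=
  Real.measurable_exp.indicator measurableSet_Iio

lemma integrable_of_mem_unit {g : ℝ → ℝ} (hg : Measurable g) (h : ∀ t, 0 ≤ g t ∧ g t ≤ 1)
    (m s : ℝ) : Integrable (fun z => g (m + s * z)) (gaussianReal 0 1) := by
  refine Integrable.of_bound (C := 1) (hg.comp (by fun_prop)).aestronglyMeasurable (ae_of_all _ fun z => ?_)
  rw [Real.norm_eq_abs, abs_of_nonneg (h _).1]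
  exact (h _).2

lemma integral_mem_unit {g : ℝ → ℝ} (hg : Measurable g) (h : ∀ t, 0 ≤ g t ∧ g t ≤ 1)
    (m s : ℝ) : 0 ≤ ∫ z, g (m + s * z) ∂(gaussianReal 0 1) ∧
      ∫ z, g (m + s * z) ∂(gaussianReal 0 1) ≤ 1 := by
  refine ⟨integral_nonneg fun z => (h _).1, ?_⟩
  calc _ ≤ ∫ _, (1:ℝ) ∂(gaussianReal 0 1) :=
        integral_mono (integrable_of_mem_unit hg h m s) (integrable_const _) fun z => (h _).2
    _ = 1 := by simp

lemma gaussMin_mem (m s : ℝ) : 0 ≤ gaussMin m s ∧ gaussMin m s ≤ 1 :=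
  integral_mem_unit (g := fun t => min 1 (Real.exp t)) (by fun_prop) min_exp_mem m s

lemma gaussNeg_mem (m s : ℝ) : 0 ≤ gaussNeg m s ∧ gaussNeg m s ≤ 1 :=
  integral_mem_unit measurable_indicator_exp indicator_exp_mem m s

lemma abs_min_exp_sub_le (u v : ℝ) :
    |min 1 (Real.exp u) - min 1 (Real.exp v)| ≤ |u - v| := by
  wlog h : v ≤ u generalizing u v
  · rw [abs_sub_comm, abs_sub_comm u]
    exact this v u (le_of_not_ge h)
  rw [abs_of_nonneg (sub_nonneg.2 (min_le_min le_rfl (Real.exp_le_exp.2 h))),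
    abs_of_nonneg (sub_nonneg.2 h)]
  -- the bound `1 - (u - v) ≤ e^{v - u}` handles the whole range `u ≤ 0`
  have h1 : 1 - (u - v) ≤ Real.exp (v - u) := by
    have := Real.add_one_le_exp (v - u)
    linarith
  have h2 : Real.exp v = Real.exp u * Real.exp (v - u) := by
    rw [← Real.exp_add]
    ring_nf
  rcases le_total u 0 with hu | hu
  · have hu1 := Real.exp_le_one_iff.2 hu
    have hv1 := Real.exp_le_one_iff.2 (h.trans hu)
    rw [min_eq_right hu1, min_eq_right hv1, h2]
    nlinarith [Real.exp_pos u]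
  · rw [min_eq_left (Real.one_le_exp hu)]
    rcases le_total v 0 with hv | hv
    · rw [min_eq_right (Real.exp_le_one_iff.2 hv)]
      have := Real.add_one_le_exp v
      linarith
    · rw [min_eq_left (Real.one_le_exp hv)]
      linarith

lemma integrable_abs_gaussian : Integrable (fun z : ℝ => |z|) (gaussianReal 0 1) :=
  ((memLp_id_gaussianReal 1).integrable (by simp)).abs

lemma gaussMin_sub_le (m m' s s' : ℝ) :
    |gaussMin m s - gaussMin m' s'| ≤
      |m - m'| + |s - s'| * ∫ z, |z| ∂(gaussianReal 0 1) := by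
  have hint := integrable_of_mem_unit (g := fun t => min 1 (Real.exp t)) (by fun_prop) min_exp_mem
  rw [gaussMin, gaussMin, ← integral_sub (hint m s) (hint m' s')]
  calc _ ≤ ∫ z, |min 1 (Real.exp (m + s * z)) - min 1 (Real.exp (m' + s' * z))|
            ∂(gaussianReal 0 1) := abs_integral_le_integral_abs
    _ ≤ ∫ z, (|m - m'| + |s - s'| * |z|) ∂(gaussianReal 0 1) := by
        refine integral_mono ((hint m s).sub (hint m' s')).abs
          ((integrable_const _).add (integrable_abs_gaussian.const_mul _)) fun z => ?_
        refine (abs_min_exp_sub_le _ _).trans ?_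
        rw [← abs_mul, show m + s * z - (m' + s' * z) = (m - m') + (s - s') * z by ring]
        exact abs_add_le _ _
    _ = _ := by
        rw [integral_add (integrable_const _) (integrable_abs_gaussian.const_mul _),
          integral_const_mul]
        simp

lemma stdCDF_eq_Ici (t : ℝ) : (gaussianReal 0 1).real (Ici (-t)) = stdCDF t := by
  have h := gaussianReal_map_neg (μ := 0) (v := 1)
  rw [neg_zero] at h
  rw [stdCDF, ← h, Measure.map_apply (by fun_prop) measurableSet_Iic, h, measureReal_def]
  congr 2
  ext z
  simp

/-- `e^u 1_{u<0} = min(1, e^u) - 1_{u≥0}`, integrated. -/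
lemma gaussNeg_eq (m : ℝ) {s : ℝ} (hs : 0 < s) : gaussNeg m s = gaussMin m s - stdCDF (m / s) := by
  have h : ∀ z, (Set.Iio (0:ℝ)).indicator Real.exp (m + s * z) =
      min 1 (Real.exp (m + s * z)) - (Ici (-(m / s))).indicator (fun _ => (1:ℝ)) z := by
    intro z
    have hiff : -(m / s) ≤ z ↔ 0 ≤ m + s * z := by
      rw [← neg_div, div_le_iff₀ hs]
      constructor <;> intro h <;> linarith
    by_cases hz : m + s * z < 0
    · rw [indicator_of_mem (mem_Iio.2 hz), min_eq_right (Real.exp_le_one_iff.2 hz.le),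
        indicator_of_notMem (by rw [mem_Ici, hiff]; exact not_le.2 hz), sub_zero]
    · rw [indicator_of_notMem (by simpa using hz), min_eq_left (Real.one_le_exp (not_lt.1 hz)),
        indicator_of_mem (by rw [mem_Ici, hiff]; exact not_lt.1 hz), sub_self]
  rw [gaussNeg, integral_congr_ae (ae_of_all _ h), integral_sub, ← stdCDF_eq_Ici]
  · rw [integral_indicator_const _ measurableSet_Ici]
    simp [gaussMin]
  · exact integrable_of_mem_unit (g := fun t => min 1 (Real.exp t)) (by fun_prop) min_exp_mem m s
  · exact (integrable_const _).indicator measurableSet_Ici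

/-- Exponential change of measure: `e^{-s²/2 + sZ}` shifts the mean of `Z` by `s`, so the event
`-s²/2 + sZ < 0` becomes `Z < -s/2`. -/
lemma gaussNeg_critical {s : ℝ} (hs : 0 < s) : gaussNeg (-(s ^ 2) / 2) s = stdCDF (-s / 2) := by
  have hshift : gaussNeg (-(s ^ 2) / 2) s =
      ∫ z, (Iio (s / 2)).indicator (fun _ => (1:ℝ)) z ∂(gaussianReal s 1) := by
    rw [gaussNeg, integral_gaussianReal_eq_integral_smul one_ne_zero,
      integral_gaussianReal_eq_integral_smul one_ne_zero]
    refine integral_congr_ae (ae_of_all _ fun z => ?_)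
    have hiff : -(s ^ 2) / 2 + s * z < 0 ↔ z < s / 2 := by
      constructor <;> intro h <;> nlinarith
    by_cases hz : z < s / 2
    · simp only [indicator_of_mem (mem_Iio.2 (hiff.2 hz)), indicator_of_mem (mem_Iio.2 hz),
        gaussianPDFReal, smul_eq_mul, mul_one, NNReal.coe_one]
      rw [mul_assoc, ← Real.exp_add]
      ring_nf
    · have h1 : -(s ^ 2) / 2 + s * z ∉ Iio (0:ℝ) := fun h => hz (hiff.1 h)
      have h2 : z ∉ Iio (s / 2) := hz
      simp [indicator_of_notMem h1, indicator_of_notMem h2]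
  have hmap := gaussianReal_map_const_sub (μ := 0) (v := 1) s
  rw [sub_zero] at hmap
  have := nullSingletonClass_gaussianReal (μ := s) one_ne_zero
  have h2 : (Iio (s / 2)).indicator (fun _ => (1:ℝ)) =ᵐ[gaussianReal s 1]
      (Iic (s / 2)).indicator (fun _ => (1:ℝ)) :=
    indicator_ae_eq_of_ae_eq_set Iio_ae_eq_Iic
  rw [hshift, integral_congr_ae h2, integral_indicator_const _ measurableSet_Iic, smul_eq_mul,
    mul_one, ← hmap, measureReal_def, Measure.map_apply (by fun_prop) measurableSet_Iic,
    ← measureReal_def, ← stdCDF_eq_Ici]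
  congr 1
  ext z
  simp only [mem_preimage, mem_Iic, mem_Ici]
  constructor <;> intro h <;> linarith

lemma gaussMin_critical {s : ℝ} (hs : 0 < s) :
    gaussMin (-(s ^ 2) / 2) s = 2 * stdCDF (-s / 2) := by
  have h1 := gaussNeg_eq (-(s ^ 2) / 2) hs
  rw [gaussNeg_critical hs] at h1
  have h2 : -(s ^ 2) / 2 / s = -s / 2 := by
    field_simp
  rw [h2] at h1
  linarith

/-- For a fixed reference point with `s' > 0`, `gaussNeg` is Lipschitz at `(m', s')` uniformly in
`(m, s)`: away from `s = 0` because `m / s` is, and near `s = 0` because `stdCDF` is bounded. -/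
lemma gaussNeg_sub_le (m m' : ℝ) {s s' : ℝ} (hs' : 0 < s') :
    |gaussNeg m s - gaussNeg m' s'| ≤ (1 + 2 / s') * |m - m'| +
      ((∫ z, |z| ∂(gaussianReal 0 1)) + 2 * |m'| / s' ^ 2 + 2 / s') * |s - s'| := by
  have hM : 0 ≤ ∫ z : ℝ, |z| ∂(gaussianReal 0 1) := integral_nonneg fun z => abs_nonneg z
  have hmm := abs_nonneg (m - m')
  have hss := abs_nonneg (s - s')
  rcases le_total (s' / 2) s with h | h
  · have hs0 : 0 < s := by linarith
    have hq : |m / s - m' / s'| ≤ 2 / s' * |m - m'| + 2 * |m'| / s' ^ 2 * |s - s'| := by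
      have e : m / s - m' / s' = (m - m') / s + m' * (s' - s) / (s * s') := by
        field_simp
        ring
      have hinv : 1 / s ≤ 2 / s' := by
        rw [div_le_div_iff₀ hs0 hs']
        linarith
      rw [e]
      refine (abs_add_le _ _).trans (add_le_add ?_ ?_)
      · rw [abs_div, abs_of_pos hs0, div_eq_mul_one_div, mul_comm]
        gcongr
      · have e2 : |m' * (s' - s) / (s * s')| = 1 / s * (|m'| / s' * |s - s'|) := by
          rw [abs_div, abs_mul, abs_of_pos (mul_pos hs0 hs'), abs_sub_comm]
          field_simp
        have e3 : 2 * |m'| / s' ^ 2 * |s - s'| = 2 / s' * (|m'| / s' * |s - s'|) := by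
          field_simp
        rw [e2, e3]
        gcongr
    rw [gaussNeg_eq m hs0, gaussNeg_eq m' hs']
    have h1 := gaussMin_sub_le m m' s s'
    have h2 := (stdCDF_sub_le (m / s) (m' / s')).trans hq
    have h3 : 0 ≤ 2 / s' * |s - s'| := by positivity
    calc _ = |(gaussMin m s - gaussMin m' s') - (stdCDF (m / s) - stdCDF (m' / s'))| := by
          congr 1; ring
      _ ≤ _ := (abs_sub _ _).trans (add_le_add h1 h2)
      _ ≤ _ := by linarith
  · have h1 : |gaussNeg m s - gaussNeg m' s'| ≤ 1 := by
      have h1 := gaussNeg_mem m s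
      have h2 := gaussNeg_mem m' s'
      rw [abs_le]
      constructor <;> linarith
    have h2 : 1 ≤ 2 / s' * |s - s'| := by
      rw [abs_sub_comm, div_mul_eq_mul_div, one_le_div hs']
      have := le_abs_self (s' - s)
      linarith
    have h3 : 0 ≤ 2 / s' * |m - m'| := by positivity
    have h4 : 0 ≤ 2 * |m'| / s' ^ 2 * |s - s'| := by positivity
    have h5 := mul_nonneg hM hss
    linarith

/-! ### The law of `𝒩(x, Y)` -/

/-- Under the proposal law, `𝒩(x, Y)` has the law of `m + sZ`, with `Z` standard normal. -/
lemma integral_Nf (ρ : ℝ → ℝ) (l : ℝ) (d : ℕ) (x : Fin d → ℝ) {g : ℝ → ℝ} (hg : Measurable g) :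
    ∫ Y, g (Nf ρ l d x Y) ∂(gaussPi l d x) =
      ∫ z, g (l ^ 2 / (2 * (d:ℝ)) * ∑ i ∈ restIdx d, d2l ρ (x i) +
        √(l ^ 2 / d * ∑ i ∈ restIdx d, (dl ρ (x i)) ^ 2) * z) ∂(gaussianReal 0 1) := by
  set S : ℝ := ∑ i ∈ restIdx d, (dl ρ (x i)) ^ 2 with hS
  have hS0 : 0 ≤ S := Finset.sum_nonneg fun i _ => sq_nonneg _
  have hv0 : 0 ≤ l ^ 2 / (d:ℝ) := by positivity
  have : IsProbabilityMeasure (gaussPi l d x) := by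
    rw [gaussPi]
    infer_instance
  have hmeas : Measurable fun Y : Fin d → ℝ => ∑ i ∈ restIdx d, dl ρ (x i) * (Y i - x i) :=
    Finset.measurable_fun_sum _ fun i _ => by fun_prop
  have hlin : (gaussPi l d x).map (fun Y => ∑ i ∈ restIdx d, dl ρ (x i) * (Y i - x i)) =
      gaussianReal 0 (l ^ 2 / d * S).toNNReal := by
    have := Measure.isProbabilityMeasure_map (μ := gaussPi l d x) hmeas.aemeasurable
    refine Measure.ext_of_charFun ?_
    have hind : iIndepFun (fun i (Y : Fin d → ℝ) => dl ρ (x i) * (Y i - x i)) (gaussPi l d x) :=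
      iIndepFun_pi (μ := fun i => gaussianReal (x i) ((l ^ 2 / (d:ℝ)).toNNReal))
        (X := fun i y => dl ρ (x i) * (y - x i)) (fun i => by fun_prop)
    have hcoord : ∀ i, (gaussPi l d x).map (fun Y => dl ρ (x i) * (Y i - x i)) =
        gaussianReal 0 (.mk (dl ρ (x i) ^ 2) (sq_nonneg _) * (l ^ 2 / (d:ℝ)).toNNReal) := by
      intro i
      have h1 : (gaussPi l d x).map (fun Y => Y i) =
          gaussianReal (x i) ((l ^ 2 / (d:ℝ)).toNNReal) :=
        (measurePreserving_eval
          (fun i => gaussianReal (x i) ((l ^ 2 / (d:ℝ)).toNNReal)) i).map_eq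
      have h2 := gaussianReal_map_sub_const (μ := x i) (v := (l ^ 2 / (d:ℝ)).toNNReal) (x i)
      have h3 := gaussianReal_map_const_mul (μ := 0) (v := (l ^ 2 / (d:ℝ)).toNNReal) (dl ρ (x i))
      rw [sub_self] at h2
      rw [mul_zero] at h3
      rw [← h3, ← h2, ← h1, Measure.map_map (by fun_prop) (by fun_prop),
        Measure.map_map (by fun_prop) (by fun_prop)]
      rfl
    rw [iIndepFun.charFun_map_fun_finsetSum_eq_prod
      (X := fun i (Y : Fin d → ℝ) => dl ρ (x i) * (Y i - x i))
      (fun i _ => Measurable.aemeasurable (by fun_prop))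
      (hind.restrict _)]
    ext t
    rw [Finset.prod_apply]
    simp only [hcoord, charFun_gaussianReal, ← Complex.exp_sum]
    congr 1
    have hSC : ((S : ℝ) : ℂ) = ∑ i ∈ restIdx d, ((dl ρ (x i) : ℝ) : ℂ) ^ 2 := by
      rw [hS]
      push_cast
      rfl
    rw [Real.coe_toNNReal _ (mul_nonneg hv0 hS0), Complex.ofReal_mul, hSC]
    simp only [NNReal.coe_mul, NNReal.coe_mk, Real.coe_toNNReal _ hv0, Complex.ofReal_mul,
      Complex.ofReal_zero, mul_zero, zero_mul, zero_sub, Finset.sum_neg_distrib,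
      Complex.ofReal_pow]
    rw [Finset.mul_sum, Finset.sum_mul, Finset.sum_div]
    congr 1
    refine Finset.sum_congr rfl fun i _ => ?_
    ring
  have hscale : (gaussianReal 0 1).map (√(l ^ 2 / d * S) * ·) =
      gaussianReal 0 (l ^ 2 / d * S).toNNReal := by
    rw [gaussianReal_map_const_mul, mul_zero, mul_one]
    congr 1
    ext
    rw [Real.coe_toNNReal _ (mul_nonneg hv0 hS0)]
    exact Real.sq_sqrt (mul_nonneg hv0 hS0)
  set m := l ^ 2 / (2 * (d:ℝ)) * ∑ i ∈ restIdx d, d2l ρ (x i)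
  have h1 := integral_map (μ := gaussPi l d x)
    (φ := fun Y => ∑ i ∈ restIdx d, dl ρ (x i) * (Y i - x i)) (f := fun u => g (m + u))
    hmeas.aemeasurable (hg.comp (by fun_prop)).aestronglyMeasurable
  have h2 := integral_map (μ := gaussianReal 0 1)
    (φ := (√(l ^ 2 / d * S) * ·)) (f := fun u => g (m + u)) (by fun_prop)
    (hg.comp (by fun_prop)).aestronglyMeasurable
  rw [hlin] at h1
  rw [hscale] at h2
  exact h1.symm.trans h2

/-! ### Uniform estimates on the typical sets `𝒜_d` -/

lemma card_restIdx (d : ℕ) [NeZero d] : ((restIdx d).card : ℝ) = (d:ℝ) - 1 := by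
  have h : restIdx d = Finset.univ.erase (0 : Fin d) := by
    ext i
    rw [restIdx, Finset.mem_filter, Finset.mem_erase, Ne, Ne, Fin.ext_iff, Fin.val_zero]
    tauto
  rw [h, Finset.card_erase_of_mem (Finset.mem_univ _), Finset.card_univ, Fintype.card_fin,
    Nat.cast_sub (Nat.one_le_iff_ne_zero.2 (NeZero.ne d)), Nat.cast_one]

/-- Replacing the centred mean over the `d - 1` indices by `1/d` times the sum costs `|b|/d`. -/
lemma abs_avg_sub_le {d : ℕ} [NeZero d] (hd : (1:ℝ) < d) (u : Fin d → ℝ) {b e : ℝ}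
    (h : (1 / ((d : ℝ) - 1)) * |∑ i ∈ restIdx d, (u i - b)| < e) :
    |1 / (d:ℝ) * ∑ i ∈ restIdx d, u i - b| ≤ |b| * (1 / d) + e := by
  rw [Finset.sum_sub_distrib, Finset.sum_const, nsmul_eq_mul, card_restIdx] at h
  set U := ∑ i ∈ restIdx d, u i
  have hd0 : (0:ℝ) < d := by linarith
  have e1 : 1 / (d:ℝ) * U - b = -(b * (1 / d)) + 1 / d * (U - ((d:ℝ) - 1) * b) := by
    field_simp
    ring
  rw [e1]
  refine (abs_add_le _ _).trans (add_le_add ?_ (le_trans ?_ h.le))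
  · rw [abs_neg, abs_mul, abs_of_pos (by positivity : 0 < 1 / (d:ℝ))]
  · rw [abs_mul, abs_of_pos (by positivity : 0 < 1 / (d:ℝ))]
    gcongr
    all_goals linarith

lemma one_lt_of_mem_Ad {ρ : ℝ → ℝ} {c : ℝ} {a : ℕ → ℝ} {d : ℕ} [NeZero d] {x : Fin d → ℝ}
    (hA : 0 < ∫ x in Aset ρ c, ρ x) (hx : x ∈ Ad ρ c a d) : (1:ℝ) < d := by
  have h1 : 1 ≤ d := Nat.one_le_iff_ne_zero.2 (NeZero.ne d)
  rcases h1.eq_or_lt with h | h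
  · have h2 := hx.2.1
    -- for `d = 1` the factor `1 / (d - 1)` is `0`
    rw [show (d:ℝ) - 1 = 0 by rw [← h]; simp, div_zero, zero_mul] at h2
    linarith
  · exact_mod_cast h

/-- On `𝒜_d`, at least a fixed proportion of the coordinates contributes `1/c²` to `∑ ((log ρ)')²`. -/
lemma lower_dl_sq {ρ : ℝ → ℝ} {c : ℝ} (hc : 0 < c) {a : ℕ → ℝ} {d : ℕ} [NeZero d] {x : Fin d → ℝ}
    (hA : 0 < ∫ x in Aset ρ c, ρ x) (hx : x ∈ Ad ρ c a d) :
    1 / c ^ 2 * ((∫ t in Aset ρ c, ρ t) / 2) <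
      1 / ((d:ℝ) - 1) * ∑ i ∈ restIdx d, (dl ρ (x i)) ^ 2 := by
  have hd := one_lt_of_mem_Ad hA hx
  have hd' : 0 < 1 / ((d:ℝ) - 1) := one_div_pos.2 (by linarith)
  have hterm : ∀ t, 1 / c ^ 2 * (Aset ρ c).indicator (fun _ => (1:ℝ)) t ≤ (dl ρ t) ^ 2 := by
    intro t
    by_cases ht : t ∈ Aset ρ c
    · rw [indicator_of_mem ht, mul_one, ← sq_abs (dl ρ t), ← one_div_pow]
      have := ht.2.1
      gcongr
    · rw [indicator_of_notMem ht, mul_zero]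
      exact sq_nonneg _
  calc _ < 1 / c ^ 2 * (1 / ((d:ℝ) - 1) *
          ∑ i ∈ restIdx d, (Aset ρ c).indicator (fun _ => (1:ℝ)) (x i)) :=
        mul_lt_mul_of_pos_left hx.2.1 (by positivity)
    _ = 1 / ((d:ℝ) - 1) *
          ∑ i ∈ restIdx d, 1 / c ^ 2 * (Aset ρ c).indicator (fun _ => (1:ℝ)) (x i) := by
        rw [← Finset.mul_sum]
        ring
    _ ≤ _ := mul_le_mul_of_nonneg_left (Finset.sum_le_sum fun i _ => hterm _) hd'.le

/-- The two expectations in `Ğ_d` are within `O(a_d/√d)` of their limits, uniformly on `𝒜_d`. -/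
lemma expectations_close (ρ : ℝ → ℝ) (hpos : ∀ x, 0 < ρ x) (l : ℝ) (hl : 0 < l)
    (c : ℝ) (hc : 0 < c) (hA : 0 < ∫ x in Aset ρ c, ρ x)
    (a : ℕ → ℝ) (ha : Sluggish a) :
    ∃ C : ℝ, 0 ≤ C ∧ ∀ (d : ℕ) [NeZero d], ∀ x ∈ Ad ρ c a d,
      |2 * stdCDF (-(l * √(Jc ρ)) / 2) - ∫ Y, min 1 (Real.exp (Nf ρ l d x Y)) ∂(gaussPi l d x)| ≤
        C * (a d / √d) ∧
      |stdCDF (-(l * √(Jc ρ)) / 2) -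
        ∫ Y, (Set.Iio (0:ℝ)).indicator Real.exp (Nf ρ l d x Y) ∂(gaussPi l d x)| ≤
        C * (a d / √d) := by
  have hJ0 : 0 ≤ Jc ρ := integral_nonneg fun t => mul_nonneg (sq_nonneg _) (hpos t).le
  set J := Jc ρ with hJ
  obtain ⟨ha0, hatop, -⟩ := ha
  obtain ⟨B, hB⟩ := (tendsto_inv_atTop_zero.comp hatop).bddAbove_range
  have hB1 : ∀ d, 1 ≤ B * a d := fun d => by
    have h := hB (mem_range_self d)
    rwa [Function.comp_apply, inv_le_iff_one_le_mul₀ (ha0 d)] at h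
  have hB0 : 0 ≤ B := by
    have h1 := hB1 0
    have h2 := ha0 0
    by_contra! h
    nlinarith
  set K3 := √(3 * rhoE ρ fun t => ((dl ρ t) ^ 2 - J) ^ 2)
  set K4 := √(3 * rhoE ρ fun t => (d2l ρ t + J) ^ 2)
  have hK3 : 0 ≤ K3 := Real.sqrt_nonneg _
  have hK4 : 0 ≤ K4 := Real.sqrt_nonneg _
  have hmin : ∀ (d : ℕ) (x : Fin d → ℝ),
      ∫ Y, min 1 (Real.exp (Nf ρ l d x Y)) ∂(gaussPi l d x) = gaussMin _ _ := fun d x =>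
    integral_Nf ρ l d x (g := fun t => min 1 (Real.exp t)) (by fun_prop)
  have hneg : ∀ (d : ℕ) (x : Fin d → ℝ),
      ∫ Y, (Set.Iio (0:ℝ)).indicator Real.exp (Nf ρ l d x Y) ∂(gaussPi l d x) = gaussNeg _ _ :=
    fun d x => integral_Nf ρ l d x measurable_indicator_exp
  rcases hJ0.eq_or_lt with hJz | hJpos
  · -- If `J = 0` (its value as an integral also when `((log ρ)')²` is not `ρ`-integrable), the
    -- second and third conditions on `𝒜_d` bound `a_d/√d` from below, so boundedness suffices.
    set δ := 1 / c ^ 2 * ((∫ t in Aset ρ c, ρ t) / 2)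
    have hδ : 0 < δ := by positivity
    refine ⟨2 * (K3 / δ), by positivity, fun d _ x hx => ?_⟩
    have hlow := lower_dl_sq hc hA hx
    have h3 := hx.2.2.1
    have hS : 0 ≤ ∑ i ∈ restIdx d, (dl ρ (x i)) ^ 2 := Finset.sum_nonneg fun i _ => sq_nonneg _
    rw [← hJ] at h3
    have h3' : δ ≤ a d / √d * K3 := by
      refine hlow.le.trans (le_trans (le_of_eq ?_) h3.le)
      simp only [← hJz, sub_zero]
      rw [abs_of_nonneg hS]
    have h1 : 2 ≤ 2 * (K3 / δ) * (a d / √d) := by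
      have : 1 ≤ (a d / √d * K3) / δ := (one_le_div hδ).2 h3'
      calc (2:ℝ) ≤ 2 * ((a d / √d * K3) / δ) := by linarith
        _ = _ := by ring
    rw [hmin, hneg]
    set p := stdCDF (-(l * √J) / 2)
    have hp0 : 0 ≤ p := stdCDF_nonneg _
    have hp1 : p ≤ 1 := stdCDF_le_one _
    constructor
    · refine le_trans ?_ h1
      have := gaussMin_mem (l ^ 2 / (2 * (d:ℝ)) * ∑ i ∈ restIdx d, d2l ρ (x i))
        (√(l ^ 2 / d * ∑ i ∈ restIdx d, (dl ρ (x i)) ^ 2))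
      rw [abs_le]
      constructor <;> linarith
    · refine le_trans ?_ h1
      have := gaussNeg_mem (l ^ 2 / (2 * (d:ℝ)) * ∑ i ∈ restIdx d, d2l ρ (x i))
        (√(l ^ 2 / d * ∑ i ∈ restIdx d, (dl ρ (x i)) ^ 2))
      rw [abs_le]
      constructor <;> linarith
  · set s' := l * √J with hs'
    have hs'0 : 0 < s' := by positivity
    have hs'sq : s' ^ 2 = l ^ 2 * J := by rw [hs', mul_pow, Real.sq_sqrt hJ0]
    set M := ∫ z : ℝ, |z| ∂(gaussianReal 0 1)
    have hM : 0 ≤ M := integral_nonneg fun z => abs_nonneg z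
    set Cm := l ^ 2 / 2 * (J * B + K4)
    set Cs := l ^ 2 * (J * B + K3) / s'
    have hCm : 0 ≤ Cm := by positivity
    have hCs : 0 ≤ Cs := by positivity
    set P := 1 + 2 / s'
    set Q := M + 2 * |-(s' ^ 2) / 2| / s' ^ 2 + 2 / s'
    have hP : 0 ≤ P := by positivity
    have hQ : 0 ≤ Q := by positivity
    refine ⟨(Cm + Cs * M) + (P * Cm + Q * Cs), by positivity, fun d _ x hx => ?_⟩
    have hd := one_lt_of_mem_Ad hA hx
    have hd0 : (0:ℝ) < d := by linarith
    set ε := a d / √d with hε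
    have hε0 : 0 < ε := div_pos (ha0 d) (Real.sqrt_pos.2 hd0)
    have hdε : 1 / (d:ℝ) ≤ B * ε := by
      have h1 : √(d:ℝ) ≤ d := Real.sqrt_le_self_iff.2 (Or.inr hd.le)
      calc 1 / (d:ℝ) ≤ 1 / √d := one_div_le_one_div_of_le (Real.sqrt_pos.2 hd0) h1
        _ ≤ (B * a d) / √d := by
          gcongr
          exact hB1 d
        _ = B * ε := by rw [hε]; ring
    have hJd : J * (1 / (d:ℝ)) ≤ J * B * ε := by
      rw [mul_assoc]
      gcongr
    have h3 := abs_avg_sub_le hd (fun i => (dl ρ (x i)) ^ 2) hx.2.2.1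
    have h4 := abs_avg_sub_le hd (fun i => d2l ρ (x i)) (b := -J) (e := ε * K4) (by
      simpa only [sub_neg_eq_add] using hx.2.2.2)
    rw [← hJ, abs_of_nonneg hJ0] at h3
    rw [abs_neg, abs_of_nonneg hJ0] at h4
    set S2 := ∑ i ∈ restIdx d, d2l ρ (x i)
    set S1 := ∑ i ∈ restIdx d, (dl ρ (x i)) ^ 2 with hS1
    have hS1n : 0 ≤ S1 := Finset.sum_nonneg fun i _ => sq_nonneg _
    set m := l ^ 2 / (2 * (d:ℝ)) * S2 with hm
    set s := √(l ^ 2 / d * S1) with hs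
    have hs0 : 0 ≤ s := Real.sqrt_nonneg _
    have hmm : |-(s' ^ 2) / 2 - m| ≤ Cm * ε := by
      have e1 : -(s' ^ 2) / 2 - m = -(l ^ 2 / 2 * (1 / (d:ℝ) * S2 - -J)) := by
        rw [hs'sq, hm]
        field_simp
        ring
      rw [e1, abs_neg, abs_mul, abs_of_pos (by positivity : 0 < l ^ 2 / 2)]
      calc l ^ 2 / 2 * |1 / (d:ℝ) * S2 - -J| ≤ l ^ 2 / 2 * (J * B * ε + ε * K4) := by
            gcongr
            exact h4.trans (by linarith)
        _ = Cm * ε := by ring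
    have hss : |s' - s| ≤ Cs * ε := by
      -- difference of squares: `|s' - s| s' ≤ |s'² - s²|`
      have e1 : (s' - s) * (s' + s) = -(l ^ 2 * (1 / (d:ℝ) * S1 - J)) := by
        have : s ^ 2 = l ^ 2 / d * S1 := Real.sq_sqrt (by positivity)
        have e : (s' - s) * (s' + s) = s' ^ 2 - s ^ 2 := by ring
        rw [e, hs'sq, this]
        ring
      have e2 : |s' - s| * s' ≤ l ^ 2 * |1 / (d:ℝ) * S1 - J| := by
        calc |s' - s| * s' ≤ |s' - s| * |s' + s| := by
              gcongr
              rw [abs_of_nonneg (by positivity)]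
              linarith
          _ = _ := by
              rw [← abs_mul, e1, abs_neg, abs_mul, abs_of_pos (by positivity : 0 < l ^ 2)]
      have e3 : |s' - s| * s' ≤ l ^ 2 * (J * B + K3) * ε := by
        refine e2.trans ?_
        rw [mul_assoc]
        gcongr
        linarith
      calc |s' - s| ≤ (l ^ 2 * (J * B + K3) * ε) / s' := (le_div_iff₀ hs'0).2 e3
        _ = Cs * ε := by ring
    have hPQ : 0 ≤ (P * Cm + Q * Cs) * ε := by positivity
    have hMM : 0 ≤ (Cm + Cs * M) * ε := by positivity
    rw [hmin, hneg, ← gaussMin_critical hs'0, ← gaussNeg_critical hs'0]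
    constructor
    · calc _ ≤ |-(s' ^ 2) / 2 - m| + |s' - s| * M := gaussMin_sub_le _ _ _ _
        _ ≤ Cm * ε + Cs * ε * M := by gcongr
        _ ≤ _ := by linarith
    · rw [abs_sub_comm]
      rw [abs_sub_comm] at hmm hss
      calc _ ≤ P * |m - -(s' ^ 2) / 2| + Q * |s - s'| := gaussNeg_sub_le _ _ hs'0
        _ ≤ P * (Cm * ε) + Q * (Cs * ε) := by gcongr
        _ ≤ _ := by linarith

/-! ### Weighted sup-norms and the generator estimate -/

lemma normIS_nonneg (g : ℝ → ℝ) (s : ℝ) : 0 ≤ normIS g s :=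
  Real.iSup_nonneg fun _ => mul_nonneg (Real.exp_nonneg _) (abs_nonneg _)

lemma MemS.abs_iteratedDeriv_le {n : ℕ} {g : ℝ → ℝ} (hg : MemS n g) {i : ℕ} (hi : i ≤ n) (x : ℝ) :
    |iteratedDeriv i g x| ≤ normIS (iteratedDeriv i g) (1/2) * Real.exp (|x| / 2) := by
  have h : Real.exp (-(1 / 2 * |x|)) * |iteratedDeriv i g x| ≤ normIS (iteratedDeriv i g) (1/2) :=
    le_ciSup (hg.2 (1/2) (by norm_num) i hi) x
  calc |iteratedDeriv i g x|
      = Real.exp (-(1 / 2 * |x|)) * |iteratedDeriv i g x| * Real.exp (|x| / 2) := by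
        rw [mul_right_comm, ← Real.exp_add]
        ring_nf
        simp
    _ ≤ _ := by gcongr

/-- **Proposition.** There is a constant `C` with
`|G f(x₁) - Ğ_d f(x)| ≤ C (Σ_{i=1}^2 ‖f⁽ⁱ⁾‖_{∞,1/2}) e^{|x₁|} a_d/√d` for every `f ∈ S³`,
all `d ∈ ℕ` and every `x ∈ 𝒜_d`. -/
theorem stmt8 (ρ : ℝ → ℝ) (hmeas : Measurable ρ) (hpos : ∀ x, 0 < ρ x)
    (hint : ∫ x, ρ x = 1) (hlog : MemS 4 fun x => Real.log (ρ x))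
    (htail : SuperExpTails ρ) (l : ℝ) (hl : 0 < l)
    (c : ℝ) (hc : 0 < c) (hA : 0 < ∫ x in Aset ρ c, ρ x)
    (a : ℕ → ℝ) (ha : Sluggish a) :
    ∃ C : ℝ, ∀ (d : ℕ) [NeZero d], ∀ f : ℝ → ℝ, MemS 3 f → ∀ x ∈ Ad ρ c a d,
      |Gop ρ l f (x 0) - bGd ρ l d f x| ≤
        C * (∑ i ∈ Finset.Icc 1 2, normIS (iteratedDeriv i f) (1/2)) *
          Real.exp |x 0| * (a d / Real.sqrt d) := by
  obtain ⟨C0, hC0, hclose⟩ := expectations_close ρ hpos l hl c hc hA a ha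
  set R := normIS (iteratedDeriv 1 fun x => Real.log (ρ x)) (1/2)
  have hR : 0 ≤ R := normIS_nonneg _ _
  refine ⟨(l ^ 2 / 2 + l ^ 2 * R) * C0, fun d _ f hf x hx => ?_⟩
  obtain ⟨h1, h2⟩ := hclose d x hx
  have hdl : |dl ρ (x 0)| ≤ R * Real.exp (|x 0| / 2) := by
    have h := hlog.abs_iteratedDeriv_le (i := 1) (by norm_num) (x 0)
    rwa [show iteratedDeriv 1 (fun x => Real.log (ρ x)) (x 0) = dl ρ (x 0) by
      rw [iteratedDeriv_one]; rfl] at h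
  have hf1 := hf.abs_iteratedDeriv_le (i := 1) (by norm_num) (x 0)
  have hf2 := hf.abs_iteratedDeriv_le (i := 2) (by norm_num) (x 0)
  set n1 := normIS (iteratedDeriv 1 f) (1/2) with hn1
  set n2 := normIS (iteratedDeriv 2 f) (1/2) with hn2
  have hn1' : 0 ≤ n1 := normIS_nonneg _ _
  have hn2' : 0 ≤ n2 := normIS_nonneg _ _
  have hsum : ∑ i ∈ Finset.Icc 1 2, normIS (iteratedDeriv i f) (1/2) = n1 + n2 := by
    rw [show Finset.Icc 1 2 = {1, 2} by rfl, Finset.sum_pair (by norm_num)]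
  rw [iteratedDeriv_one] at hf1
  rw [iteratedDeriv_succ, iteratedDeriv_one] at hf2
  rw [hsum]
  set ε := a d / √(d:ℝ)
  have hε : 0 ≤ ε := div_nonneg (ha.1 d).le (Real.sqrt_nonneg _)
  set E := Real.exp (|x 0| / 2) with hE
  have hE1 : 1 ≤ E := Real.one_le_exp (by positivity)
  have hEE : Real.exp |x 0| = E * E := by
    rw [hE, ← Real.exp_add, add_halves]
  rw [hEE, Gop, _root_.hc, bGd]
  set p := stdCDF (-(l * √(Jc ρ)) / 2)
  set I1 := ∫ Y, min 1 (Real.exp (Nf ρ l d x Y)) ∂(gaussPi l d x)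
  set I2 := ∫ Y, (Set.Iio (0:ℝ)).indicator Real.exp (Nf ρ l d x Y) ∂(gaussPi l d x)
  calc _ = |l ^ 2 / 2 * (deriv (deriv f) (x 0) * (2 * p - I1)) +
          l ^ 2 * (deriv f (x 0) * dl ρ (x 0) * (p - I2))| := by
        congr 1
        ring
    _ ≤ l ^ 2 / 2 * (|deriv (deriv f) (x 0)| * |2 * p - I1|) +
          l ^ 2 * (|deriv f (x 0)| * |dl ρ (x 0)| * |p - I2|) := by
        refine (abs_add_le _ _).trans (le_of_eq ?_)
        simp only [abs_mul]
        rw [abs_of_pos (by positivity : 0 < l ^ 2 / 2), abs_of_pos (by positivity : 0 < l ^ 2)]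
    _ ≤ l ^ 2 / 2 * (n2 * E * (C0 * ε)) + l ^ 2 * (n1 * E * (R * E) * (C0 * ε)) := by
        gcongr
    _ ≤ l ^ 2 / 2 * (n2 * (E * E) * (C0 * ε)) + l ^ 2 * (n1 * E * (R * E) * (C0 * ε)) := by
        gcongr
        exact le_mul_of_one_le_left (by positivity) hE1
    _ ≤ _ := by
        have h3 : 0 ≤ l ^ 2 / 2 * (n1 * (E * E) * (C0 * ε)) := by positivity
        have h4 : 0 ≤ l ^ 2 * R * (n2 * (E * E) * (C0 * ε)) := by positivity
        linarith
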